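/- Let F be an algebraically closed field of characteristic different from 2, V an F-vector space of dimension n ≥ 3, X : V^{n−1} → V an alternating (n−1)-fold cross product relative to a nondegenerate symmetric bilinear form b, G an abelian group, and V = ⊕_{g∈G} V_g a G-grading on (V, X). Let h = ∏_{g∈G} g^{dim V_g} (a finite product, as only finitely many V_g are nonzero). Then: (1) h^{n−2} = e, the neutral element of G; (2) b(V_{g₁}, V_{g₂}) = 0 whenever g₁g₂ ≠ h; and (3) dim V_g = dim V_{g⁻¹h} for every g ∈ G. -/

import Mathlib

/-!
Let `e` be a basis of homogeneous vectors, `d i` the degree of `e i`, and `h = ∏ i, d i`.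
The form `Φ(v₁, …, vₙ) = b(X(v₁, …, vₙ₋₁), vₙ)` is alternating and nonzero, hence does not vanish on
a basis. So for each `i`, the product `w i` of all basis vectors other than `e i` is orthogonal to
every `e j` with `j ≠ i` but not to `e i`: up to scalars, `w` is the basis dual to `e`
(`exists_dual_family`). As `w i` is homogeneous of degree `(d i)⁻¹ * h`, there are two
homogeneous bases, with degrees `d i` and `(d i)⁻¹ * h`.

The number of members of degree `g` in a homogeneous basis is `dim V_g`
(`finrank_component`), and the product of all degrees is `h` (`finprod_pow_finrank`). Comparing
the two bases gives `dim V_g = dim V_{g⁻¹h}` and `h = hⁿ / h`. Expanding `u` in `w` and `v` in `e`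
gives the orthogonality.
-/

open Module

/-- An `r`-fold cross product on `V` relative to the bilinear form `b`. -/
def IsCrossProduct {F V : Type*} [Field F] [AddCommGroup V] [Module F V] {r : ℕ}
    (b : LinearMap.BilinForm F V) (X : MultilinearMap F (fun _ : Fin r => V) V) : Prop :=
  (∀ v : Fin r → V, ∀ i : Fin r, b (X v) (v i) = 0) ∧
  (∀ v : Fin r → V, b (X v) (X v) = (Matrix.of fun i j : Fin r => b (v i) (v j)).det)

section HomogeneousBasis

variable {F V G ι : Type*} [Field F] [AddCommGroup V] [Module F V] [DecidableEq G]
  [Fintype ι] {𝒱 : G → Submodule F V}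

/-- A homogeneous element is the sum of the terms of its own degree in its expansion in a
homogeneous basis. -/
lemma eq_sum_filter_of_mem (hint : DirectSum.IsInternal 𝒱) (e : Basis ι F V) (d : ι → G)
    (he : ∀ i, e i ∈ 𝒱 (d i)) {g : G} {u : V} (hu : u ∈ 𝒱 g) :
    u = ∑ i with d i = g, e.repr u i • e i := by
  have hsum := Finset.sum_filter_add_sum_filter_not Finset.univ (fun i => d i = g)
    (fun i => e.repr u i • e i)
  rw [e.sum_repr u] at hsum
  set s := ∑ i with d i = g, e.repr u i • e i
  set t := ∑ i with ¬ d i = g, e.repr u i • e i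
  have hs : s ∈ 𝒱 g := by
    refine Submodule.sum_mem _ fun i hi => Submodule.smul_mem _ _ ?_
    rw [← (Finset.mem_filter.mp hi).2]
    exact he i
  have ht : t ∈ ⨆ j, ⨆ (_ : j ≠ g), 𝒱 j := by
    refine Submodule.sum_mem _ fun i hi => Submodule.smul_mem _ _ ?_
    exact Submodule.mem_iSup_of_mem (d i)
      (Submodule.mem_iSup_of_mem (Finset.mem_filter.mp hi).2 (he i))
  have ht' : t ∈ 𝒱 g := by
    have : t = u - s := by rw [← hsum]; abel
    rw [this]
    exact Submodule.sub_mem _ hu hs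
  have ht0 : t = 0 :=
    Submodule.disjoint_def.mp (hint.submodule_iSupIndep g) t ht' ht
  rw [← hsum, ht0, add_zero]

lemma finrank_component (hint : DirectSum.IsInternal 𝒱) (e : Basis ι F V) (d : ι → G)
    (he : ∀ i, e i ∈ 𝒱 (d i)) (g : G) :
    finrank F (𝒱 g) = (Finset.univ.filter fun i => d i = g).card := by
  have hspan : 𝒱 g = Submodule.span F (Set.range (e ∘ (Subtype.val : {i // d i = g} → ι))) := by
    apply le_antisymm
    · intro u hu
      rw [eq_sum_filter_of_mem hint e d he hu]
      refine Submodule.sum_mem _ fun i hi => Submodule.smul_mem _ _ ?_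
      exact Submodule.subset_span ⟨⟨i, (Finset.mem_filter.mp hi).2⟩, rfl⟩
    · rw [Submodule.span_le]
      rintro _ ⟨⟨i, rfl⟩, rfl⟩
      exact he i
  rw [hspan, finrank_span_eq_card (e.linearIndependent.comp _ Subtype.val_injective),
    Fintype.card_subtype]

lemma finprod_pow_finrank [CommGroup G] (hint : DirectSum.IsInternal 𝒱) (e : Basis ι F V) (d : ι → G)
    (he : ∀ i, e i ∈ 𝒱 (d i)) :
    ∏ᶠ g : G, g ^ finrank F (𝒱 g) = ∏ i, d i := by
  simp_rw [finrank_component hint e d he]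
  rw [finprod_eq_prod_of_mulSupport_subset (s := Finset.univ.image d)]
  · exact (Finset.prod_comp (s := Finset.univ) (fun g : G => g) d).symm
  · intro g hg
    by_contra hgd
    apply hg
    have : (Finset.univ.filter fun i => d i = g) = ∅ := by
      ext i
      simp only [Finset.mem_filter, Finset.mem_univ, true_and, Finset.notMem_empty, iff_false]
      rintro rfl
      simp at hgd
    simp [this]

lemma exists_homogeneous_basis [FiniteDimensional F V] (hint : DirectSum.IsInternal 𝒱) {n : ℕ}
    (hn : finrank F V = n) :
    ∃ (e : Basis (Fin n) F V) (d : Fin n → G), ∀ i, e i ∈ 𝒱 (d i) := by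
  let B := hint.collectedBasis fun g => finBasis F (𝒱 g)
  have : Fintype (Σ g : G, Fin (finrank F (𝒱 g))) := FiniteDimensional.fintypeBasisIndex B
  let σ : (Σ g : G, Fin (finrank F (𝒱 g))) ≃ Fin n :=
    Fintype.equivFinOfCardEq (by rw [← hn, finrank_eq_card_basis B])
  refine ⟨B.reindex σ, fun i => (σ.symm i).1, fun i => ?_⟩
  rw [Basis.reindex_apply]
  exact hint.collectedBasis_mem _ _

end HomogeneousBasis

section CrossProduct

variable {F V : Type*} [Field F] [AddCommGroup V] [Module F V] {m : ℕ}

/-- The alternating form `Φ(v₁, …, vₘ₊₁) = b(X(v₁, …, vₘ), vₘ₊₁)` attached to an alternating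
`m`-fold cross product. -/
def crossForm (b : LinearMap.BilinForm F V) (X : MultilinearMap F (fun _ : Fin m => V) V)
    (halt : ∀ (v : Fin m → V) (i j : Fin m), i ≠ j → v i = v j → X v = 0)
    (hX : IsCrossProduct b X) : V [⋀^Fin (m + 1)]→ₗ[F] F :=
  { (b.compMultilinearMap X).uncurryRight with
    map_eq_zero_of_eq' := by
      intro v i j hij hne
      change b (X (Fin.init v)) (v (Fin.last m)) = 0
      induction i using Fin.lastCases with
      | last =>
        induction j using Fin.lastCases with
        | last => exact absurd rfl hne
        | cast j => rw [hij]; exact hX.1 (Fin.init v) j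
      | cast i =>
        induction j using Fin.lastCases with
        | last => rw [← hij]; exact hX.1 (Fin.init v) i
        | cast j =>
          rw [halt (Fin.init v) i j (fun h => hne (by rw [h])) hij]
          simp }

lemma crossForm_apply (b : LinearMap.BilinForm F V) (X : MultilinearMap F (fun _ : Fin m => V) V)
    (halt : ∀ (v : Fin m → V) (i j : Fin m), i ≠ j → v i = v j → X v = 0)
    (hX : IsCrossProduct b X) (v : Fin (m + 1) → V) :
    crossForm b X halt hX v = b (X fun k => v k.castSucc) (v (Fin.last m)) := rfl

/-- On an orthogonal basis `v` the Gram determinant of the first `m` vectors is nonzero, so their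
product is a nonzero vector orthogonal to each of them, hence not orthogonal to the last one. -/
lemma crossForm_ne_zero [FiniteDimensional F V] (hchar : (2 : F) ≠ 0)
    (hdim : finrank F V = m + 1) (b : LinearMap.BilinForm F V) (hb : b.Nondegenerate)
    (hsymm : ∀ u v : V, b u v = b v u) (X : MultilinearMap F (fun _ : Fin m => V) V)
    (halt : ∀ (v : Fin m → V) (i j : Fin m), i ≠ j → v i = v j → X v = 0)
    (hX : IsCrossProduct b X) : crossForm b X halt hX ≠ 0 := by
  intro h0
  have : Invertible (2 : F) := invertibleOfNonzero hchar
  obtain ⟨v₀, hv₀⟩ := LinearMap.BilinForm.exists_orthogonal_basis (B := b) ⟨hsymm⟩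
  let v : Basis (Fin (m + 1)) F V := v₀.reindex (finCongr hdim)
  have hv : ∀ i j, i ≠ j → b (v i) (v j) = 0 := by
    intro i j hij
    simp only [v, Basis.reindex_apply]
    exact hv₀ (fun h => hij ((finCongr hdim).symm.injective h))
  have hvv : ∀ i, b (v i) (v i) ≠ 0 := by
    intro i hi
    refine v.ne_zero i (hb.1 _ fun y => ?_)
    have : b (v i) = 0 := v.ext fun j => by
      by_cases hij : i = j
      · subst hij; simpa using hi
      · simpa using hv i j hij
    simp [this]
  let x := X fun k => v k.castSucc
  have hxx : b x x ≠ 0 := by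
    rw [hX.2]
    have : (Matrix.of fun i j : Fin m => b (v i.castSucc) (v j.castSucc)) =
        Matrix.diagonal fun i => b (v i.castSucc) (v i.castSucc) := by
      ext i j
      by_cases hij : i = j
      · subst hij; simp
      · rw [Matrix.diagonal_apply_ne _ hij, Matrix.of_apply]
        exact hv _ _ fun h => hij (Fin.castSucc_injective _ h)
    rw [this, Matrix.det_diagonal]
    exact Finset.prod_ne_zero_iff.mpr fun i _ => hvv _
  have hx : b x = 0 := v.ext fun j => by
    induction j using Fin.lastCases with
    | last =>
      have := crossForm_apply b X halt hX v
      rw [h0] at this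
      simpa using this.symm
    | cast j => simpa using hX.1 (fun k => v k.castSucc) j
  exact hxx (by simp [hx])

/-- For a homogeneous basis `e`, there is a homogeneous basis `w` with `w i` orthogonal to every
`e j`, `j ≠ i`: take for `w i` the product of all basis vectors other than `e i`. -/
lemma exists_dual_family [FiniteDimensional F V] (hchar : (2 : F) ≠ 0)
    (hdim : finrank F V = m + 1) (b : LinearMap.BilinForm F V) (hb : b.Nondegenerate)
    (hsymm : ∀ u v : V, b u v = b v u) (X : MultilinearMap F (fun _ : Fin m => V) V)
    (halt : ∀ (v : Fin m → V) (i j : Fin m), i ≠ j → v i = v j → X v = 0)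
    (hX : IsCrossProduct b X) {G : Type*} [CommGroup G] {𝒱 : G → Submodule F V}
    (hgraded : ∀ (g : Fin m → G) (v : Fin m → V),
      (∀ i, v i ∈ 𝒱 (g i)) → X v ∈ 𝒱 (∏ i, g i))
    (e : Basis (Fin (m + 1)) F V) (d : Fin (m + 1) → G) (he : ∀ i, e i ∈ 𝒱 (d i)) :
    ∃ w : Basis (Fin (m + 1)) F V, (∀ i, w i ∈ 𝒱 ((d i)⁻¹ * ∏ j, d j)) ∧
      ∀ i j, i ≠ j → b (w i) (e j) = 0 := by
  -- `swap i last` moves `e i` to the last slot of `Φ`, so the first `m` slots hold the others.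
  let τ : Fin (m + 1) → Equiv.Perm (Fin (m + 1)) := fun i => Equiv.swap i (Fin.last m)
  let w : Fin (m + 1) → V := fun i => X fun k => e (τ i k.castSucc)
  have hτ : ∀ i, τ i (Fin.last m) = i := fun i => Equiv.swap_apply_right _ _
  have horth : ∀ i j, i ≠ j → b (w i) (e j) = 0 := by
    intro i j hij
    obtain ⟨k, rfl⟩ := (τ i).surjective j
    induction k using Fin.lastCases with
    | last => exact absurd (hτ i).symm hij
    | cast k => exact hX.1 (fun k => e (τ i k.castSucc)) k
  have hne : ∀ i, b (w i) (e i) ≠ 0 := by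
    intro i hi
    apply crossForm_ne_zero hchar hdim b hb hsymm X halt hX
    rw [AlternatingMap.eq_smul_basis_det (e.reindex (τ i).symm) (crossForm b X halt hX)]
    have : crossForm b X halt hX (e.reindex (τ i).symm) = 0 := by
      rw [crossForm_apply]
      simp only [Basis.reindex_apply, Equiv.symm_symm, hτ]
      exact hi
    rw [this, zero_smul]
  have hli : LinearIndependent F w := by
    rw [Fintype.linearIndependent_iff]
    intro c hc j
    have h1 : b (∑ i, c i • w i) (e j) = 0 := by simp [hc]
    rw [map_sum, LinearMap.sum_apply, Finset.sum_eq_single j] at h1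
    · simpa [hne j] using h1
    · intro i _ hij
      simp [horth i j hij]
    · simp
  refine ⟨basisOfLinearIndependentOfCardEqFinrank hli (by simp [hdim]), fun i => ?_, ?_⟩
  · rw [coe_basisOfLinearIndependentOfCardEqFinrank]
    have : (d i)⁻¹ * ∏ j, d j = ∏ k : Fin m, d (τ i k.castSucc) := by
      rw [← Equiv.prod_comp (τ i) d, Fin.prod_univ_castSucc, hτ]
      simp
    rw [this]
    exact hgraded _ _ fun k => he _
  · rw [coe_basisOfLinearIndependentOfCardEqFinrank]
    exact horth

end CrossProduct

/-- for a `G`-grading `V = ⊕ V_g` of an alternating `(n-1)`-fold cross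
product and `h = ∏_g g^(dim V_g)`, one has `h^(n-2) = 1`, `b(V_{g₁}, V_{g₂}) = 0` unless
`g₁g₂ = h`, and `dim V_g = dim V_{g⁻¹h}` for all `g`. -/
theorem stmt15 (F V : Type*) [Field F] [IsAlgClosed F] [AddCommGroup V] [Module F V] [FiniteDimensional F V]
    (hchar : (2 : F) ≠ 0)
    (n : ℕ) (hn : 3 ≤ n) (hdim : finrank F V = n)
    (b : LinearMap.BilinForm F V)
    (hbnd : b.Nondegenerate) (hbsymm : ∀ u v : V, b u v = b v u)
    (X : MultilinearMap F (fun _ : Fin (n - 1) => V) V)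
    (halt : ∀ (v : Fin (n - 1) → V) (i j : Fin (n - 1)), i ≠ j → v i = v j → X v = 0)
    (hX : IsCrossProduct b X)
    (G : Type*) [CommGroup G] [DecidableEq G]
    (𝒱 : G → Submodule F V)
    (hinternal : DirectSum.IsInternal 𝒱)
    (hgraded : ∀ (g : Fin (n - 1) → G) (v : Fin (n - 1) → V),
      (∀ i, v i ∈ 𝒱 (g i)) → X v ∈ 𝒱 (∏ i, g i)) :
    (∏ᶠ g : G, g ^ (finrank F ↥(𝒱 g))) ^ (n - 2) = 1 ∧
    (∀ g₁ g₂ : G, g₁ * g₂ ≠ ∏ᶠ g : G, g ^ (finrank F ↥(𝒱 g)) →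
      ∀ u ∈ 𝒱 g₁, ∀ v ∈ 𝒱 g₂, b u v = 0) ∧
    (∀ g : G, finrank F ↥(𝒱 g) =
      finrank F ↥(𝒱 (g⁻¹ * ∏ᶠ g' : G, g' ^ (finrank F ↥(𝒱 g'))))) := by
  obtain ⟨m, rfl⟩ : ∃ m, n = m + 1 := ⟨n - 1, by omega⟩
  obtain ⟨e, d, he⟩ := exists_homogeneous_basis hinternal hdim
  obtain ⟨w, hw, horth⟩ :=
    exists_dual_family hchar hdim b hbnd hbsymm X halt hX hgraded e d he
  have hh := finprod_pow_finrank hinternal e d he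
  have hh' := finprod_pow_finrank hinternal w _ hw
  rw [hh] at hh'
  rw [hh]
  set h := ∏ i, d i with hdef
  refine ⟨?_, ?_, ?_⟩
  · rw [Finset.prod_mul_distrib, Finset.prod_inv_distrib, ← hdef, Finset.prod_const,
      Finset.card_univ, Fintype.card_fin, eq_inv_mul_iff_mul_eq] at hh'
    obtain ⟨k, rfl⟩ : ∃ k, m = k + 1 := ⟨m - 1, by omega⟩
    change h ^ k = 1
    rw [pow_succ, pow_succ, mul_assoc] at hh'
    exact mul_eq_right.mp hh'.symm
  · intro g₁ g₂ hg u hu v hv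
    rw [eq_sum_filter_of_mem hinternal w _ hw hu, eq_sum_filter_of_mem hinternal e d he hv]
    rw [map_sum]
    refine Finset.sum_eq_zero fun j hj => ?_
    rw [map_sum, LinearMap.sum_apply]
    refine Finset.sum_eq_zero fun i hi => ?_
    have hi' := (Finset.mem_filter.mp hi).2
    have hj' := (Finset.mem_filter.mp hj).2
    have hij : i ≠ j := by
      rintro rfl
      apply hg
      rw [← hi', ← hj', mul_comm, mul_inv_cancel_left]
    simp [horth i j hij]
  · intro g
    rw [finrank_component hinternal w _ hw g, finrank_component hinternal e d he]
    congr 1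
    ext i
    simp only [Finset.mem_filter, Finset.mem_univ, true_and]
    constructor
    · rintro rfl
      simp
    · intro hi
      rw [hi]
      simp
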